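/- arXiv:1903.08107 — 3 statements merged into one kernel-verified Lean document; each statement's English description precedes it below -/
import Mathlib

section
/- Let k be a field, d₁ ≥ 1 and d₂ ≥ 1 natural numbers, and let F₀, F₁, F₂, F₃ ∈ k[ū,u,v̄,v] be bihomogeneous polynomials of bidegree (d₁,d₂). Consider the 3×4 matrix whose rows are (∂Fⱼ/∂u)ⱼ, (∂Fⱼ/∂ū)ⱼ, (∂Fⱼ/∂v)ⱼ. Then for every choice of three of the four columns, the corresponding 3×3 minor of this matrix is divisible by v̄ in k[ū,u,v̄,v]. (This is the content of equation (2.2): the 4×4 determinant with generic last row (x₀,x₁,x₂,x₃) factors as v̄·(x₀Δ₀ + x₁Δ₁ + x₂Δ₂ + x₃Δ₃), where the reduced signed minors Δᵢ are bihomogeneous of bidegree (3d₁−2, 3d₂−2).) -/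
/-!
The two gradings give two Euler identities, `ū F_ū + u F_u = d₁ F` and `v̄ F_v̄ + v F_v = d₂ F`.
Eliminating `F` shows that the combination `d₂ (u F_u + ū F_ū) - d₁ v F_v` of the rows of the
matrix equals the row `d₁ v̄ F_v̄`, a multiple of `v̄`. Hence `v̄` divides `d₁ v` times the minor.
If `d₁ ≠ 0` in `k`, the prime `v̄` does not divide `d₁ v`, so it divides the minor. If `d₁ = 0`
in `k`, the first Euler identity is a linear relation `u F_u + ū F_ū = 0` between two rows, and the
minor vanishes.
-/

open MvPolynomial

/-- The bigrading weights on `k[ū,u,v̄,v]` (variables indexed `ū = 0`, `u = 1`, `v̄ = 2`,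
`v = 3`): `ū, u ↦ (1,0)` and `v̄, v ↦ (0,1)`. -/
def biWeight : Fin 4 → ℕ × ℕ := ![(1, 0), (1, 0), (0, 1), (0, 1)]

/-- A weighted homogeneous polynomial stays so when its weights and degree are pushed forward along
an additive map, here used for the two projections of the bigrading. -/
theorem IsWeightedHomogeneous_comp_addMonoidHom {σ R M N : Type*} [CommSemiring R]
    [AddCommMonoid M] [AddCommMonoid N] (f : M →+ N) {w : σ → M} {p : MvPolynomial σ R} {m : M}
    (hp : IsWeightedHomogeneous w p m) : IsWeightedHomogeneous (f ∘ w) p (f m) := by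
  intro d hd
  rw [← hp hd]
  simp [Finsupp.weight_apply, Finsupp.sum, map_sum, map_nsmul]

theorem euler_fst {k : Type*} [CommRing k] {d₁ d₂ : ℕ} {p : MvPolynomial (Fin 4) k}
    (hp : IsWeightedHomogeneous biWeight p (d₁, d₂)) :
    X 0 * pderiv 0 p + X 1 * pderiv 1 p = C (d₁ : k) * p := by
  have h := (IsWeightedHomogeneous_comp_addMonoidHom (AddMonoidHom.fst ℕ ℕ)
    hp).sum_weight_X_mul_pderiv
  simpa [Fin.sum_univ_four, biWeight] using h

theorem euler_snd {k : Type*} [CommRing k] {d₁ d₂ : ℕ} {p : MvPolynomial (Fin 4) k}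
    (hp : IsWeightedHomogeneous biWeight p (d₁, d₂)) :
    X 2 * pderiv 2 p + X 3 * pderiv 3 p = C (d₂ : k) * p := by
  have h := (IsWeightedHomogeneous_comp_addMonoidHom (AddMonoidHom.snd ℕ ℕ)
    hp).sum_weight_X_mul_pderiv
  simpa [Fin.sum_univ_four, biWeight] using h

/-- Let `F₀, F₁, F₂, F₃ ∈ k[ū,u,v̄,v]` be bihomogeneous of bidegree
`(d₁, d₂)` with `d₁ ≥ 1` and `d₂ ≥ 1`, and consider the 3×4 matrix with rows
`(∂Fⱼ/∂u)ⱼ`, `(∂Fⱼ/∂ū)ⱼ`, `(∂Fⱼ/∂v)ⱼ`. Then every 3×3 minor of this matrix (obtained by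
choosing three of the four columns) is divisible by `v̄` in `k[ū,u,v̄,v]`. -/
theorem X2_dvd_minor_of_tensor_jacobian
    {k : Type} [Field k] (d₁ d₂ : ℕ) (hd₁ : 1 ≤ d₁) (hd₂ : 1 ≤ d₂)
    (F : Fin 4 → MvPolynomial (Fin 4) k)
    (hF : ∀ j, IsWeightedHomogeneous biWeight (F j) (d₁, d₂))
    (c : Fin 3 → Fin 4) (hc : Function.Injective c) :
    (X (2 : Fin 4) : MvPolynomial (Fin 4) k) ∣
      (Matrix.of fun i l : Fin 3 =>
          ![pderiv (1 : Fin 4) (F (c l)), pderiv (0 : Fin 4) (F (c l)),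
            pderiv (3 : Fin 4) (F (c l))] i).det := by
  have h1 := fun l => euler_fst (hF (c l))
  have h2 := fun l => euler_snd (hF (c l))
  simp only [Matrix.det_fin_three, Matrix.of_apply, Matrix.cons_val]
  by_cases h0 : (d₁ : k) = 0
  · simp only [h0, C_0, zero_mul] at h1
    -- The rows of `∂/∂u` and `∂/∂ū` are proportional, so `u` times the minor vanishes.
    refine Dvd.intro 0 ?_
    rw [mul_zero, eq_comm]
    refine (mul_eq_zero.mp ?_).resolve_left (X_ne_zero (R := k) (1 : Fin 4))
    have e : ∀ l, X 1 * pderiv 1 (F (c l)) = -(X 0 * pderiv 0 (F (c l))) :=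
      fun l => by linear_combination h1 l
    have e0 := e 0
    have e1 := e 1
    have e2 := e 2
    generalize F (c 0) = P at *
    generalize F (c 1) = Q at *
    generalize F (c 2) = S at *
    linear_combination
      (pderiv 0 Q * pderiv 3 S - pderiv 0 S * pderiv 3 Q) * e0
      - (pderiv 0 P * pderiv 3 S - pderiv 0 S * pderiv 3 P) * e1
      + (pderiv 0 P * pderiv 3 Q - pderiv 0 Q * pderiv 3 P) * e2
  · have key : ∀ l, C (d₁ : k) * (X 3 * pderiv 3 (F (c l))) =
        C (d₂ : k) * (X 0 * pderiv 0 (F (c l)) + X 1 * pderiv 1 (F (c l)))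
          - X 2 * (C (d₁ : k) * pderiv 2 (F (c l))) :=
      fun l => by linear_combination C (d₁ : k) * h2 l - C (d₂ : k) * h1 l
    have hnd : ¬ (X 2 : MvPolynomial (Fin 4) k) ∣ C (d₁ : k) * X 3 := by
      rintro ⟨q, hq⟩
      have := congrArg (eval (Pi.single (3 : Fin 4) (1 : k))) hq
      simp [h0] at this
    have hprime : Prime (X 2 : MvPolynomial (Fin 4) k) := X_prime
    refine (hprime.dvd_or_dvd ?_).resolve_left hnd
    have e0 := key 0
    have e1 := key 1
    have e2 := key 2
    generalize F (c 0) = P at *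
    generalize F (c 1) = Q at *
    generalize F (c 2) = S at *
    -- The cofactor is minus the minor with third row replaced by `d₁ ∂/∂v̄`.
    refine ⟨-C (d₁ : k) * (pderiv 2 P * (pderiv 1 Q * pderiv 0 S - pderiv 1 S * pderiv 0 Q)
      - pderiv 2 Q * (pderiv 1 P * pderiv 0 S - pderiv 1 S * pderiv 0 P)
      + pderiv 2 S * (pderiv 1 P * pderiv 0 Q - pderiv 1 Q * pderiv 0 P)), ?_⟩
    linear_combination
      (pderiv 1 Q * pderiv 0 S - pderiv 1 S * pderiv 0 Q) * e0
      - (pderiv 1 P * pderiv 0 S - pderiv 1 S * pderiv 0 P) * e1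
      + (pderiv 1 P * pderiv 0 Q - pderiv 1 Q * pderiv 0 P) * e2
end

section
/- Let k be a field, let R = k[X₀,X₁,X₂,X₃,X₄] be the polynomial ring in five variables over k, and let B be the product ideal (X₀,X₁,X₂)·(X₃,X₄) (the irrelevant ideal of ℙ² × ℙ¹). Then the local cohomology modules Hⁱ_B(R) of R with support in B vanish for every natural number i with i ∉ {2,3,4}. -/
/-!
Local cohomology `Hⁱ_B(R)` is the direct limit of `Extⁱ(R/Bᵗ, R)`. It vanishes as soon as every
power `Bᵗ` contains an ideal `J` with `B ≤ √J` and `Extⁱ(R/J, R) = 0`: since `Bᴺ ≤ J ≤ Bᵗ` for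
some `N`, the transition maps of the direct system factor through zero
(`localCohomology_subsingleton`). The ideals used are `J = I ⊓ K` with `I = (X₀ᵗ, X₁ᵗ, X₂ᵗ)` and
`K = (X₃ᵗ, X₄ᵗ)`; as the two sets of variables are disjoint, `I ⊓ K ≤ I * K ≤ Bᵗ`.

* For `i ≥ 5`, powers of distinct variables form regular sequences, so `R/I`, `R/K` and
  `R/(I ⊔ K)` have projective dimension at most `3`, `2` and `5`. The Mayer–Vietoris sequence
  `0 → R/(I ⊓ K) → R/I × R/K → R/(I ⊔ K) → 0` shows that `R/J` has projective dimension at most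
  `4`.
* For `i ≤ 1`, the ideal `J` contains the coprime elements `X₀ᵗX₃ᵗ` and `X₁ᵗX₄ᵗ`, so it has grade
  at least `2`.

Mathlib's `localCohomology` is built on `_root_.Ext` (a derived functor), whereas the long exact
sequences and the projective dimension are about `CategoryTheory.Abelian.Ext`;
`isZero_ext_of_subsingleton` passes from the second to the first.
-/

open MvPolynomial
open CategoryTheory Limits Opposite

/-! ### Homological algebra over a commutative ring -/

section General
universe u
variable {R : Type u} [CommRing R]

/-- If `Abelian.Ext X Y n` is trivial, then so is the derived functor `Ext`: both are computed by
the cocycles and coboundaries of a projective resolution of `X`. -/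
lemma isZero_ext_of_subsingleton (X Y : ModuleCat.{u} R) (n : ℕ)
    [Subsingleton (Abelian.Ext.{u} X Y n)] :
    IsZero (((Ext R (ModuleCat.{u} R) n).obj (op X)).obj Y) := by
  let P := projectiveResolution X
  refine IsZero.of_iso ?_ (P.isoExt n Y)
  rw [← HomologicalComplex.exactAt_iff_isZero_homology]
  cases n with
  | zero =>
    rw [HomologicalComplex.exactAt_iff' _ 0 0 1 (by simp) (by simp),
      ShortComplex.moduleCat_exact_iff]
    intro (f : P.complex.X 0 ⟶ Y) hf
    replace hf : P.complex.d 1 0 ≫ f = 0 := hf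
    obtain ⟨g, hg⟩ : ∃ g : X ⟶ Y, P.π.f 0 ≫ g = f := by
      let g := CokernelCofork.IsColimit.desc' P.isColimitCokernelCofork f hf
      exact ⟨g.1, g.2⟩
    have hg0 : g = 0 := Abelian.Ext.homEquiv₀.symm.injective (Subsingleton.elim _ _)
    refine ⟨0, ?_⟩
    rw [map_zero, ← hg, hg0]
    exact comp_zero.symm
  | succ n =>
    rw [HomologicalComplex.exactAt_iff' _ n (n+1) (n+2) (by simp) (by simp),
      ShortComplex.moduleCat_exact_iff]
    intro (f : P.complex.X (n+1) ⟶ Y) hf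
    replace hf : P.complex.d (n+2) (n+1) ≫ f = 0 := hf
    obtain ⟨g, hg⟩ := (P.extMk_eq_zero_iff f (n+2) rfl hf n rfl).1
      (Subsingleton.elim _ _)
    exact ⟨g, hg⟩

/-- Local cohomology with support in `B` vanishes in degree `i` if every power of `B` contains an
ideal `J` with radical containing `B` for which `Extⁱ(R/J, M)` vanishes. -/
lemma localCohomology_subsingleton (B : Ideal R) (hB : B.FG) (i : ℕ) (M : ModuleCat.{u} R)
    (h : ∀ t : ℕ, ∃ J : Ideal R, J ≤ B ^ t ∧ B ≤ J.radical ∧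
      Subsingleton (Abelian.Ext.{u} (ModuleCat.of R (R ⧸ J)) M i)) :
    Subsingleton ((localCohomology B i).obj M) := by
  let F := localCohomology.diagram (localCohomology.idealPowersDiagram B) i
  have : HasColimit F := localCohomology.hasColimitDiagram.{u, 0} _ i
  rw [← ModuleCat.isZero_iff_subsingleton]
  change IsZero ((colimit F).obj M)
  rw [IsZero.iff_id_eq_zero]
  refine (isColimitOfPreserves ((evaluation _ _).obj M) (colimit.isColimit F)).hom_ext ?_
  intro t
  obtain ⟨J, hJ, hrad, hE⟩ := h t.unop.unop
  obtain ⟨N, hN⟩ := Ideal.exists_pow_le_of_le_radical_of_fg hrad hB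
  have hNt : B ^ (max N t.unop.unop) ≤ J := (Ideal.pow_le_pow_right (le_max_left _ _)).trans hN
  -- The transition map `Extⁱ(R/Bᵗ, M) → Extⁱ(R/Bᴺ, M)` factors through `Extⁱ(R/J, M) = 0`.
  let N' : (ℕᵒᵖ)ᵒᵖ := op (op (max N t.unop.unop))
  let w : t ⟶ N' := (homOfLE (le_max_right N t.unop.unop)).op.op
  have hw : (F.map w).app M = 0 := by
    let a : ModuleCat.of R (R ⧸ B ^ (max N t.unop.unop)) ⟶ ModuleCat.of R (R ⧸ J) :=
      ModuleCat.ofHom (Submodule.mapQ _ _ LinearMap.id hNt)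
    let b : ModuleCat.of R (R ⧸ J) ⟶ ModuleCat.of R (R ⧸ B ^ t.unop.unop) :=
      ModuleCat.ofHom (Submodule.mapQ _ _ LinearMap.id hJ)
    have hab : (localCohomology.ringModIdeals (localCohomology.idealPowersDiagram B)).map
        w.unop = a ≫ b := by
      refine ModuleCat.hom_ext (Submodule.linearMap_qext _ ?_)
      rfl
    have hF : F.map w = (Ext R (ModuleCat.{u} R) i).map (a ≫ b).op :=
      congrArg (fun v => (Ext R (ModuleCat.{u} R) i).map (Quiver.Hom.op v)) hab
    rw [hF, op_comp, Functor.map_comp, NatTrans.comp_app]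
    rw [(isZero_ext_of_subsingleton (ModuleCat.of R (R ⧸ J)) M i).eq_of_tgt
      (((Ext R (ModuleCat.{u} R) i).map b.op).app M) 0, zero_comp]
    rfl
  have hz : (colimit.ι F t).app M = 0 := by
    rw [← colimit.w F w, NatTrans.comp_app, hw, zero_comp]
  change (colimit.ι F t).app M ≫ _ = (colimit.ι F t).app M ≫ _
  rw [hz, zero_comp, zero_comp]

lemma ext_zero_subsingleton [IsDomain R] (J : Ideal R) {f : R} (hf : f ∈ J) (hf0 : f ≠ 0) :
    Subsingleton (Abelian.Ext.{u} (ModuleCat.of R (R ⧸ J)) (ModuleCat.of R R) 0) := by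
  refine Abelian.Ext.homEquiv₀.subsingleton_congr.2 ⟨fun a b => ?_⟩
  suffices H : ∀ a : ModuleCat.of R (R ⧸ J) ⟶ ModuleCat.of R R, a = 0 by rw [H a, H b]
  intro a
  refine ModuleCat.hom_ext (LinearMap.ext fun x => ?_)
  have : f • a.hom x = 0 := by
    rw [← map_smul]
    obtain ⟨y, rfl⟩ := Submodule.Quotient.mk_surjective _ x
    rw [← Submodule.Quotient.mk_smul, (Submodule.Quotient.mk_eq_zero J).2
      (by simpa using J.mul_mem_right y hf), map_zero]
  exact (smul_eq_zero.1 this).resolve_left hf0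

/-- `Ext¹(R/J, R)` is the cokernel of `Hom(R, R) → Hom(J, R)`. It vanishes if `J` contains a
regular sequence `f, g`: a map `ψ : J → R` satisfies `f ψ(g) = g ψ(f)`, so `f` divides `ψ(f)`, and
`ψ` is multiplication by the quotient. -/
lemma ext_one_subsingleton [IsDomain R] (J : Ideal R) {f g : R} (hf : f ∈ J) (hf0 : f ≠ 0)
    (hg : g ∈ J) (hfg : ∀ p, f ∣ g * p → f ∣ p) :
    Subsingleton (Abelian.Ext.{u} (ModuleCat.of R (R ⧸ J)) (ModuleCat.of R R) 1) := by
  let S : ShortComplex (ModuleCat.{u} R) := ShortComplex.mk (ModuleCat.ofHom J.subtype)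
    (ModuleCat.ofHom J.mkQ) (by ext x; exact (Submodule.Quotient.mk_eq_zero J).2 x.2)
  have hS : S.ShortExact := by
    have : Mono S.f := (ModuleCat.mono_iff_injective _).2 J.subtype_injective
    have : Epi S.g := (ModuleCat.epi_iff_surjective _).2 J.mkQ_surjective
    exact ⟨ShortComplex.Exact.moduleCat_of_range_eq_ker _ _ (by simp)⟩
  suffices H : ∀ a : Abelian.Ext.{u} S.X₃ (ModuleCat.of R R) 1, a = 0 from
    ⟨fun a b => (H a).trans (H b).symm⟩
  intro a
  have : Projective S.X₂ := inferInstanceAs (Projective (ModuleCat.of R R))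
  obtain ⟨b, rfl⟩ := Abelian.Ext.contravariant_sequence_exact₃ hS _ a
    (Abelian.Ext.eq_zero_of_projective _) (add_zero 1)
  obtain ⟨φ, rfl⟩ := (Abelian.Ext.mk₀_bijective _ _).2 b
  let ψ : J →ₗ[R] R := φ.hom
  have hcomm : ∀ x y : J, (x : R) * ψ y = y * ψ x := by
    intro x y
    rw [← smul_eq_mul, ← map_smul, ← smul_eq_mul, ← map_smul]
    congr 1
    ext
    simp [mul_comm]
  obtain ⟨c, hc⟩ := hfg (ψ ⟨f, hf⟩) ⟨ψ ⟨g, hg⟩, hcomm ⟨g, hg⟩ ⟨f, hf⟩⟩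
  have hφ : φ = S.f ≫ ModuleCat.ofHom (LinearMap.toSpanSingleton R R c) := by
    ext x
    change ψ x = (x : R) * c
    apply mul_left_cancel₀ hf0
    rw [hcomm ⟨f, hf⟩ x, hc]
    ring
  rw [hφ, ← Abelian.Ext.mk₀_comp_mk₀]
  exact hS.extClass_comp_assoc _

/-- Dividing `R/I` by an `R/I`-regular element raises the projective dimension by at most one. -/
lemma hasProjectiveDimensionLT_quotient_sup_span (I : Ideal R) (x : R)
    (hx : ∀ p, x * p ∈ I → p ∈ I) (n : ℕ)
    (h : HasProjectiveDimensionLT (ModuleCat.of R (R ⧸ I)) n) :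
    HasProjectiveDimensionLT (ModuleCat.of R (R ⧸ (I ⊔ Ideal.span {x}))) (n + 1) := by
  let f : (R ⧸ I) →ₗ[R] (R ⧸ I) := LinearMap.lsmul R (R ⧸ I) x
  let g : (R ⧸ I) →ₗ[R] (R ⧸ (I ⊔ Ideal.span {x})) :=
    Submodule.mapQ I _ LinearMap.id (le_sup_left : I ≤ I ⊔ Ideal.span {x})
  have hfg : LinearMap.range f = LinearMap.ker g := by
    ext y
    obtain ⟨y, rfl⟩ := Submodule.Quotient.mk_surjective _ y
    constructor
    · rintro ⟨z, hz⟩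
      obtain ⟨z, rfl⟩ := Submodule.Quotient.mk_surjective _ z
      rw [← hz]
      exact (Submodule.Quotient.mk_eq_zero _).2 (Ideal.mul_mem_right z _
        (Ideal.mem_sup_right (Ideal.mem_span_singleton_self x)))
    · intro hy
      obtain ⟨a, ha, b, hb, rfl⟩ := Submodule.mem_sup.1 ((Submodule.Quotient.mk_eq_zero _).1 hy)
      obtain ⟨c, rfl⟩ := Ideal.mem_span_singleton.1 hb
      refine ⟨Submodule.Quotient.mk c, (Submodule.Quotient.eq I).2 ?_⟩
      simpa using ha
  let S : ShortComplex (ModuleCat.{u} R) := ShortComplex.mk (ModuleCat.ofHom f)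
    (ModuleCat.ofHom g) (ModuleCat.hom_ext (LinearMap.range_le_ker_iff.1 hfg.le))
  have hS : S.ShortExact := by
    have : Mono S.f := by
      refine (ModuleCat.mono_iff_injective _).2 ((injective_iff_map_eq_zero f).2 fun y hy => ?_)
      obtain ⟨y, rfl⟩ := Submodule.Quotient.mk_surjective _ y
      exact (Submodule.Quotient.mk_eq_zero _).2 (hx y ((Submodule.Quotient.mk_eq_zero _).1 hy))
    have : Epi S.g := by
      refine (ModuleCat.epi_iff_surjective _).2 fun y => ?_
      obtain ⟨y, rfl⟩ := Submodule.Quotient.mk_surjective _ y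
      exact ⟨Submodule.Quotient.mk y, rfl⟩
    exact ⟨ShortComplex.Exact.moduleCat_of_range_eq_ker _ _ hfg⟩
  exact hS.hasProjectiveDimensionLT_X₃ n h (hasProjectiveDimensionLT_of_ge _ n (n + 1) n.le_succ)

/-- The Mayer–Vietoris sequence `0 → R/(I ⊓ K) → R/I × R/K → R/(I ⊔ K) → 0` bounds the projective
dimension of `R/(I ⊓ K)`. -/
lemma hasProjectiveDimensionLT_quotient_inf (I K : Ideal R) (n : ℕ)
    (hI : HasProjectiveDimensionLT (ModuleCat.of R (R ⧸ I)) n)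
    (hK : HasProjectiveDimensionLT (ModuleCat.of R (R ⧸ K)) n)
    (hIK : HasProjectiveDimensionLT (ModuleCat.of R (R ⧸ (I ⊔ K))) (n + 1)) :
    HasProjectiveDimensionLT (ModuleCat.of R (R ⧸ (I ⊓ K))) n := by
  let f : (R ⧸ (I ⊓ K)) →ₗ[R] (R ⧸ I) × (R ⧸ K) :=
    (Submodule.mapQ (I ⊓ K) I LinearMap.id (inf_le_left : I ⊓ K ≤ I)).prod
      (Submodule.mapQ (I ⊓ K) K LinearMap.id (inf_le_right : I ⊓ K ≤ K))
  let g : ((R ⧸ I) × (R ⧸ K)) →ₗ[R] (R ⧸ (I ⊔ K)) :=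
    (Submodule.mapQ I (I ⊔ K) LinearMap.id (le_sup_left : I ≤ I ⊔ K)).coprod
      (-Submodule.mapQ K (I ⊔ K) LinearMap.id (le_sup_right : K ≤ I ⊔ K))
  have hg : ∀ a b : R, g (Submodule.Quotient.mk a, Submodule.Quotient.mk b) =
      Submodule.Quotient.mk (a - b) := fun a b => by
    rw [Submodule.Quotient.mk_sub, sub_eq_add_neg]
    rfl
  have hfg : LinearMap.range f = LinearMap.ker g := by
    ext ⟨a, b⟩
    obtain ⟨a, rfl⟩ := Submodule.Quotient.mk_surjective _ a
    obtain ⟨b, rfl⟩ := Submodule.Quotient.mk_surjective _ b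
    rw [LinearMap.mem_ker, hg, Submodule.Quotient.mk_eq_zero]
    constructor
    · rintro ⟨z, hz⟩
      obtain ⟨z, rfl⟩ := Submodule.Quotient.mk_surjective _ z
      have h1 : z - a ∈ I := (Submodule.Quotient.eq I).1 (congrArg Prod.fst hz)
      have h2 : z - b ∈ K := (Submodule.Quotient.eq K).1 (congrArg Prod.snd hz)
      have : a - b = -(z - a) + (z - b) := by ring
      rw [this]
      exact Submodule.add_mem_sup (neg_mem h1) h2
    · intro h
      obtain ⟨x, hx, y, hy, hxy⟩ := Submodule.mem_sup.1 h
      refine ⟨Submodule.Quotient.mk (a - x), Prod.ext ?_ ?_⟩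
      · refine (Submodule.Quotient.eq I).2 ?_
        simpa using hx
      · refine (Submodule.Quotient.eq K).2 ?_
        have : a - x - b = y := by linear_combination -hxy
        simpa [this] using hy
  let S : ShortComplex (ModuleCat.{u} R) := ShortComplex.mk (ModuleCat.ofHom f)
    (ModuleCat.ofHom g) (ModuleCat.hom_ext (LinearMap.range_le_ker_iff.1 hfg.le))
  have hS : S.ShortExact := by
    have : Mono S.f := by
      refine (ModuleCat.mono_iff_injective _).2 ((injective_iff_map_eq_zero f).2 fun y hy => ?_)
      obtain ⟨y, rfl⟩ := Submodule.Quotient.mk_surjective _ y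
      exact (Submodule.Quotient.mk_eq_zero _).2
        ⟨(Submodule.Quotient.mk_eq_zero _).1 (congrArg Prod.fst hy),
          (Submodule.Quotient.mk_eq_zero _).1 (congrArg Prod.snd hy)⟩
    have : Epi S.g := by
      refine (ModuleCat.epi_iff_surjective _).2 fun y => ?_
      obtain ⟨y, rfl⟩ := Submodule.Quotient.mk_surjective _ y
      exact ⟨(Submodule.Quotient.mk y, Submodule.Quotient.mk 0), (hg y 0).trans (by rw [sub_zero])⟩
    exact ⟨ShortComplex.Exact.moduleCat_of_range_eq_ker _ _ hfg⟩
  refine hS.hasProjectiveDimensionLT_X₁ n ?_ hIK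
  exact hasProjectiveDimensionLT_of_iso
    (ModuleCat.biprodIsoProd (ModuleCat.of R (R ⧸ I)) (ModuleCat.of R (R ⧸ K))) n

end General

/-! ### Ideals generated by powers of variables -/

section Monomial
variable {k : Type} [Field k]

/-- The ideal of `k[X₀,…,X₄]` generated by the powers `Xᵢᵗ`, `i ∈ S`. -/
noncomputable def powIdeal (k : Type) [Field k] (S : Finset (Fin 5)) (t : ℕ) :
    Ideal (MvPolynomial (Fin 5) k) :=
  Ideal.span ((fun i => X i ^ t) '' (S : Set (Fin 5)))

lemma mem_powIdeal {S : Finset (Fin 5)} {t : ℕ} {p : MvPolynomial (Fin 5) k} :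
    p ∈ powIdeal k S t ↔ ∀ m ∈ p.support, ∃ i ∈ S, t ≤ m i := by
  have := mem_ideal_span_monomial_image (x := p)
    (s := (fun i => Finsupp.single i t) '' (S : Set (Fin 5)))
  rw [Set.image_image] at this
  simp only [← X_pow_eq_monomial] at this
  rw [powIdeal, this]
  simp

/-- For `i ∉ S`, the power `Xᵢᵗ` is a nonzerodivisor modulo `powIdeal k S t`. -/
lemma powIdeal_regular {S : Finset (Fin 5)} {t : ℕ} {i : Fin 5} (hi : i ∉ S)
    (p : MvPolynomial (Fin 5) k) (hp : X i ^ t * p ∈ powIdeal k S t) : p ∈ powIdeal k S t := by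
  rw [mem_powIdeal] at hp ⊢
  intro m hm
  obtain ⟨j, hj, hle⟩ := hp (Finsupp.single i t + m) (by
    rw [mem_support_iff, X_pow_eq_monomial, coeff_monomial_mul, one_mul]
    exact mem_support_iff.1 hm)
  have hij : i ≠ j := fun h => hi (h ▸ hj)
  exact ⟨j, hj, by simpa [hij] using hle⟩

lemma powIdeal_insert (S : Finset (Fin 5)) (t : ℕ) (i : Fin 5) :
    powIdeal k (insert i S) t = powIdeal k S t ⊔ Ideal.span {X i ^ t} := by
  rw [powIdeal, Finset.coe_insert, Set.image_insert_eq, Ideal.span_insert, sup_comm, powIdeal]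

lemma powIdeal_union (S T : Finset (Fin 5)) (t : ℕ) :
    powIdeal k (S ∪ T) t = powIdeal k S t ⊔ powIdeal k T t := by
  rw [powIdeal, Finset.coe_union, Set.image_union, Ideal.span_union, powIdeal, powIdeal]

lemma hasProjectiveDimensionLT_powIdeal (S : Finset (Fin 5)) (t : ℕ) :
    HasProjectiveDimensionLT (ModuleCat.of (MvPolynomial (Fin 5) k)
      (MvPolynomial (Fin 5) k ⧸ powIdeal k S t)) (S.card + 1) := by
  induction S using Finset.induction_on with
  | empty =>
    have h0 : powIdeal k ∅ t = ⊥ := by simp [powIdeal]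
    have : Projective (ModuleCat.of (MvPolynomial (Fin 5) k) (MvPolynomial (Fin 5) k)) :=
      inferInstance
    rw [h0]
    exact hasProjectiveDimensionLT_of_iso
      (Submodule.quotEquivOfEqBot (⊥ : Ideal (MvPolynomial (Fin 5) k)) rfl).symm.toModuleIso 1
  | insert i S hi ih =>
    rw [Finset.card_insert_of_notMem hi, powIdeal_insert]
    exact hasProjectiveDimensionLT_quotient_sup_span _ _ (powIdeal_regular hi) _ ih

lemma powIdeal_inf_le {S T : Finset (Fin 5)} (hST : Disjoint S T) (t : ℕ) :
    powIdeal k S t ⊓ powIdeal k T t ≤ powIdeal k S t * powIdeal k T t := by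
  rintro p ⟨hS, hT⟩
  rw [SetLike.mem_coe, mem_powIdeal] at hS hT
  rw [p.as_sum]
  refine Ideal.sum_mem _ fun m hm => ?_
  obtain ⟨i, hi, hle⟩ := hS m hm
  obtain ⟨j, hj, hle'⟩ := hT m hm
  have hij : i ≠ j := fun h => Finset.disjoint_left.1 hST hi (h ▸ hj)
  have hm' : Finsupp.single i t + Finsupp.single j t ≤ m := by
    intro l
    by_cases h1 : i = l
    · subst h1; simpa [hij] using hle
    · by_cases h2 : j = l
      · subst h2; simpa [h1] using hle'
      · simp [h1, h2]
  obtain ⟨m', rfl⟩ := le_iff_exists_add.1 hm'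
  have : monomial (Finsupp.single i t + Finsupp.single j t + m')
      (coeff (Finsupp.single i t + Finsupp.single j t + m') p) =
      (X i ^ t * X j ^ t) *
        monomial m' (coeff (Finsupp.single i t + Finsupp.single j t + m') p) := by
    simp [X_pow_eq_monomial, monomial_mul]
  rw [this]
  exact Ideal.mul_mem_right _ _ (Ideal.mul_mem_mul
    (Ideal.subset_span ⟨i, hi, rfl⟩) (Ideal.subset_span ⟨j, hj, rfl⟩))

lemma powIdeal_le_pow (S : Finset (Fin 5)) (t : ℕ) : powIdeal k S t ≤ powIdeal k S 1 ^ t := by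
  refine Ideal.span_le.2 ?_
  rintro _ ⟨i, hi, rfl⟩
  have h : (X i : MvPolynomial (Fin 5) k) ∈ powIdeal k S 1 :=
    Ideal.subset_span ⟨i, hi, pow_one _⟩
  exact Ideal.pow_mem_pow h t

lemma powIdeal_one_le_radical (S : Finset (Fin 5)) (t : ℕ) :
    powIdeal k S 1 ≤ (powIdeal k S t).radical := by
  refine Ideal.span_le.2 ?_
  rintro _ ⟨i, hi, rfl⟩
  refine Ideal.mem_radical_iff.2 ⟨t, ?_⟩
  exact Ideal.subset_span ⟨i, hi, by simp⟩

lemma dvd_of_dvd_mul (t : ℕ) (p : MvPolynomial (Fin 5) k)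
    (h : (X 0 ^ t * X 3 ^ t : MvPolynomial (Fin 5) k) ∣ X 1 ^ t * X 4 ^ t * p) :
    (X 0 ^ t * X 3 ^ t : MvPolynomial (Fin 5) k) ∣ p := by
  have key : ∀ i j : Fin 5, i ≠ j →
      IsRelPrime (X i ^ t : MvPolynomial (Fin 5) k) (X j ^ t) := fun i j hij =>
    IsRelPrime.pow (((X_prime (R := k) (i := i)).irreducible.isRelPrime_iff_not_dvd).2
      (by rw [X_dvd_X]; simpa using hij))
  refine IsRelPrime.dvd_of_dvd_mul_left ?_ h
  exact IsRelPrime.mul_left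
    (IsRelPrime.mul_right (key _ _ (by decide)) (key _ _ (by decide)))
    (IsRelPrime.mul_right (key _ _ (by decide)) (key _ _ (by decide)))

end Monomial

/-- Let `R = k[X₀,…,X₄]` and let `B = (X₀,X₁,X₂)·(X₃,X₄)` be the
irrelevant ideal of `ℙ² × ℙ¹`. Then the local cohomology modules `Hⁱ_B(R)` vanish for
every `i ∉ {2,3,4}`. -/
theorem localCohomology_vanishing_P2xP1
    {k : Type} [Field k] (i : ℕ) (hi : i ∉ ({2, 3, 4} : Set ℕ)) :
    Subsingleton
      ((localCohomology
          ((Ideal.span {X (0 : Fin 5), X 1, X 2} : Ideal (MvPolynomial (Fin 5) k)) *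
            Ideal.span {X 3, X 4}) i).obj
        (ModuleCat.of (MvPolynomial (Fin 5) k) (MvPolynomial (Fin 5) k))) := by
  have hS : (Ideal.span {X (0 : Fin 5), X 1, X 2} : Ideal (MvPolynomial (Fin 5) k)) =
      powIdeal k {0, 1, 2} 1 := by
    simp [powIdeal, Set.image_insert_eq]
  have hT : (Ideal.span {X (3 : Fin 5), X 4} : Ideal (MvPolynomial (Fin 5) k)) =
      powIdeal k {3, 4} 1 := by
    simp [powIdeal, Set.image_insert_eq]
  rw [hS, hT]
  refine localCohomology_subsingleton _ (IsNoetherian.noetherian _) i _ fun t =>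
    ⟨powIdeal k {0, 1, 2} t ⊓ powIdeal k {3, 4} t, ?_, ?_, ?_⟩
  · rw [mul_pow]
    exact (powIdeal_inf_le (by decide) t).trans
      (Ideal.mul_mono (powIdeal_le_pow _ t) (powIdeal_le_pow _ t))
  · rw [Ideal.radical_inf]
    exact Ideal.mul_le_inf.trans
      (inf_le_inf (powIdeal_one_le_radical _ t) (powIdeal_one_le_radical _ t))
  · have hmem : ∀ a ∈ ({0, 1, 2} : Finset (Fin 5)), ∀ b ∈ ({3, 4} : Finset (Fin 5)),
        (X a ^ t * X b ^ t : MvPolynomial (Fin 5) k) ∈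
          powIdeal k {0, 1, 2} t ⊓ powIdeal k {3, 4} t := fun a ha b hb =>
      Ideal.mul_le_inf (Ideal.mul_mem_mul
        (Ideal.subset_span ⟨a, ha, rfl⟩) (Ideal.subset_span ⟨b, hb, rfl⟩))
    have hf := hmem 0 (by decide) 3 (by decide)
    have hg := hmem 1 (by decide) 4 (by decide)
    have hf0 : (X 0 ^ t * X 3 ^ t : MvPolynomial (Fin 5) k) ≠ 0 :=
      mul_ne_zero (pow_ne_zero _ (X_ne_zero _)) (pow_ne_zero _ (X_ne_zero _))
    have hi' : i = 0 ∨ i = 1 ∨ 5 ≤ i := by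
      simp only [Set.mem_insert_iff, Set.mem_singleton_iff, not_or] at hi
      omega
    rcases hi' with rfl | rfl | h5
    · exact ext_zero_subsingleton _ hf hf0
    · exact ext_one_subsingleton _ hf hf0 hg (dvd_of_dvd_mul t)
    · have h1 := hasProjectiveDimensionLT_powIdeal (k := k) {0, 1, 2} t
      have h2 := hasProjectiveDimensionLT_powIdeal (k := k) {3, 4} t
      have h3 := hasProjectiveDimensionLT_powIdeal (k := k) ({0, 1, 2} ∪ {3, 4}) t
      rw [powIdeal_union] at h3
      have := hasProjectiveDimensionLT_quotient_inf _ _ 5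
        (hasProjectiveDimensionLT_of_ge _ (({0, 1, 2} : Finset (Fin 5)).card + 1) 5 (by decide))
        (hasProjectiveDimensionLT_of_ge _ (({3, 4} : Finset (Fin 5)).card + 1) 5 (by decide)) h3
      exact HasProjectiveDimensionLT.subsingleton _ 5 i h5 _
end

section
/- Let k be a field, R = k[X₀,X₁,X₂,X₃,X₄], B₁ = (X₀,X₁,X₂), B₂ = (X₃,X₄), B = B₁·B₂, and m = B₁ + B₂ = (X₀,…,X₄). Then there are isomorphisms of R-modules H²_B(R) ≅ H²_{B₂}(R), H³_B(R) ≅ H³_{B₁}(R), and H⁴_B(R) ≅ H⁵_m(R). (This is the explicit description of the nonvanishing local cohomology of the coordinate ring of ℙ² × ℙ¹ with respect to its irrelevant ideal: H²_B(R) ≅ R_X ⊗ Ř₁, H³_B(R) ≅ Ř_X ⊗ R₁, H⁴_B(R) ≅ Ř_X ⊗ Ř₁, where Ř₁ and Ř_X are the top local cohomologies of the two factor rings.) -/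
/-!
The three isomorphisms are edges of the Mayer–Vietoris sequence of the pair `B₁`, `B₂`, obtained
at a finite level and then passed to the colimit.

Put `A_t = (X₀^(t+1), X₁^(t+1), X₂^(t+1))` and `C_t = (X₃^(t+1), X₄^(t+1))`. The sequence
`0 → R/(A_t ∩ C_t) → R/A_t × R/C_t → R/(A_t + C_t) → 0` is exact, and gives a long exact sequence of
`Ext(-, R)`. Powers of distinct variables form a regular sequence, so `Ext^i(R/A_t, R)` vanishes
unless `i = 3`, `Ext^i(R/C_t, R)` unless `i = 2`, and `Ext^i(R/(A_t + C_t), R)` for `i < 5`: below the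
length of the regular sequence by the theorem of Rees, above it by a bound on the projective
dimension. Hence `Ext²(R/C_t, R) ≅ Ext²(R/(A_t ∩ C_t), R)` and
`Ext³(R/A_t, R) ≅ Ext³(R/(A_t ∩ C_t), R)` by pullback (`bijective_mvQ`), and
`Ext⁴(R/(A_t ∩ C_t), R) ≅ Ext⁵(R/(A_t + C_t), R)` by the connecting map (`bijective_mvδ`). All of this
is natural in `t`.

Since `A_t ∩ C_t = A_t C_t`, the sequences `A_t`, `C_t`, `A_t ∩ C_t`, `A_t + C_t` are cofinal with the
powers of `B₁`, `B₂`, `B₁B₂`, `B₁ + B₂`, so that the colimits over `t` are the local cohomology modules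
(`nonempty_iso_of_cofinal`).

Mathlib defines local cohomology by the derived-functor `Ext`, while the long exact sequences are
available for `CategoryTheory.Abelian.Ext`; `extIso` is the natural comparison of the two in positive
degrees, through cocycles of a projective resolution.
-/

noncomputable section

namespace LocCoh

open CategoryTheory Limits Opposite localCohomology RingTheory.Sequence

variable {R : Type} [CommRing R] {D : Type} [SmallCategory D]

/-! ### Comparison of the two definitions of `Ext` -/

/-- The contravariant functor `X ↦ Ext^n(X, Y)` on `R`-modules, with the `R`-linear Ext groups of
`CategoryTheory.Abelian.Ext` (which, unlike the derived-functor `Ext`, come with Yoneda products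
and long exact sequences). -/
def extFunctor (n : ℕ) (Y : ModuleCat.{0} R) : (ModuleCat.{0} R)ᵒᵖ ⥤ ModuleCat.{0} R where
  obj X := ModuleCat.of R (Abelian.Ext X.unop Y n)
  map g := ModuleCat.ofHom
    (Abelian.Ext.bilinearCompOfLinear R _ _ Y 0 n n (zero_add n) (Abelian.Ext.mk₀ g.unop))
  map_id X := by ext x; simp
  map_comp f g := by
    ext x
    change (Abelian.Ext.mk₀ (g.unop ≫ f.unop)).comp x (zero_add n) =
      (Abelian.Ext.mk₀ g.unop).comp ((Abelian.Ext.mk₀ f.unop).comp x (zero_add n)) (zero_add n)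
    rw [← Abelian.Ext.mk₀_comp_mk₀_assoc]

/-- The complex `Hom(P_•, Y)` for the chosen projective resolution `P_•` of `X`; its homology is
the derived-functor `Ext` used in Mathlib's definition of local cohomology. -/
abbrev cochains (X Y : ModuleCat.{0} R) : CochainComplex (ModuleCat.{0} R) ℕ :=
  (projectiveResolution X).complex.linearYonedaObj R Y

/-- An `n`-cocycle of `Hom(P_•, Y)`, viewed as a morphism `P_n ⟶ Y`. -/
def cocycleHom {X Y : ModuleCat.{0} R} {n : ℕ} (z : (cochains X Y).cycles n) :
    (projectiveResolution X).complex.X n ⟶ Y :=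
  (cochains X Y).iCycles n z

lemma cochains_d_iCycles {X Y : ModuleCat.{0} R} (n : ℕ) (z : (cochains X Y).cycles n) :
    (projectiveResolution X).complex.d (n + 1) n ≫ cocycleHom z = 0 := by
  have := (cochains X Y).iCycles_d n (n + 1)
  exact congr($this z)

lemma smul_extMk {X Y : ModuleCat.{0} R} (P : ProjectiveResolution X) {n m : ℕ}
    (hm : n + 1 = m) (r : R) (f : P.complex.X n ⟶ Y) (hf : P.complex.d m n ≫ f = 0) :
    P.extMk (r • f) m hm (by simp [hf]) = r • P.extMk f m hm hf := by
  rw [Abelian.Ext.smul_eq_comp_mk₀, ProjectiveResolution.extMk_comp_mk₀]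
  simp

/-- The map sending an `n`-cocycle `P_n ⟶ Y` to the class in `Ext^n(X, Y)` it represents. -/
def fromCycles (X Y : ModuleCat.{0} R) (n : ℕ) :
    (cochains X Y).cycles n ⟶ (extFunctor n Y).obj (op X) :=
  ModuleCat.ofHom
    { toFun z := (projectiveResolution X).extMk (cocycleHom z) (n + 1) rfl
        (cochains_d_iCycles n z)
      map_add' z w := by
        rw [ProjectiveResolution.add_extMk]
        congr 1
        exact map_add ((cochains X Y).iCycles n).hom z w
      map_smul' r z := by
        rw [RingHom.id_apply, ← smul_extMk]
        congr 1
        exact map_smul ((cochains X Y).iCycles n).hom r z }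

lemma fromCycles_apply (X Y : ModuleCat.{0} R) (n : ℕ) (z : (cochains X Y).cycles n) :
    fromCycles X Y n z = (projectiveResolution X).extMk (cocycleHom z) (n + 1) rfl
        (cochains_d_iCycles n z) := rfl

lemma fromCycles_eq_zero_iff (X Y : ModuleCat.{0} R) (n : ℕ) (z : (cochains X Y).cycles (n + 1)) :
    fromCycles X Y (n + 1) z = 0 ↔ ∃ g : (projectiveResolution X).complex.X n ⟶ Y,
      (projectiveResolution X).complex.d (n + 1) n ≫ g = cocycleHom z :=
  ProjectiveResolution.extMk_eq_zero_iff _ _ _ rfl (cochains_d_iCycles _ z) n rfl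

lemma toCycles_fromCycles (X Y : ModuleCat.{0} R) (n : ℕ) :
    (cochains X Y).toCycles n (n + 1) ≫ fromCycles X Y (n + 1) = 0 := by
  ext x
  change fromCycles X Y (n + 1) ((cochains X Y).toCycles n (n + 1) x) = 0
  rw [fromCycles_eq_zero_iff]
  refine ⟨x, ?_⟩
  have := (cochains X Y).toCycles_i n (n + 1)
  exact (congr($this x)).symm

/-- The comparison map from the cohomology of `Hom(P_•, Y)` to `Abelian.Ext`, induced by
`fromCycles`. Only positive degrees are treated, as these are described as a cokernel. -/
def fromHomology (X Y : ModuleCat.{0} R) (n : ℕ) :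
    (cochains X Y).homology (n + 1) ⟶ (extFunctor (n + 1) Y).obj (op X) :=
  ((cochains X Y).homologyIsCokernel n (n + 1) (by simp)).desc
    (CokernelCofork.ofπ _ (toCycles_fromCycles X Y n))

lemma π_fromHomology (X Y : ModuleCat.{0} R) (n : ℕ) :
    (cochains X Y).homologyπ (n + 1) ≫ fromHomology X Y n = fromCycles X Y (n + 1) :=
  ((cochains X Y).homologyIsCokernel n (n + 1) (by simp)).fac
    (CokernelCofork.ofπ _ (toCycles_fromCycles X Y n)) .one

instance (X Y : ModuleCat.{0} R) (n : ℕ) : IsIso (fromHomology X Y n) := by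
  rw [ConcreteCategory.isIso_iff_bijective]
  have hπ : Function.Surjective ((cochains X Y).homologyπ (n + 1)) :=
    (ModuleCat.epi_iff_surjective _).mp inferInstance
  have hfac (z) : fromHomology X Y n ((cochains X Y).homologyπ (n + 1) z) =
      fromCycles X Y (n + 1) z := congr($(π_fromHomology X Y n) z)
  constructor
  · rw [injective_iff_map_eq_zero]
    intro h hh
    obtain ⟨z, rfl⟩ := hπ h
    rw [hfac, fromCycles_eq_zero_iff] at hh
    obtain ⟨g, hg⟩ := hh
    have : (cochains X Y).toCycles n (n + 1) g = z := by
      apply (ModuleCat.mono_iff_injective ((cochains X Y).iCycles (n + 1))).mp inferInstance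
      have := (cochains X Y).toCycles_i n (n + 1)
      exact congr($this g).trans hg
    rw [← this]
    have := (cochains X Y).toCycles_comp_homologyπ n (n + 1)
    exact congr($this g)
  · intro x
    obtain ⟨f, hf, rfl⟩ := (projectiveResolution X).extMk_surjective x (n + 2) rfl
    let z := (cochains X Y).cyclesMk (i := n + 1) f (n + 2) (by simp) hf
    refine ⟨(cochains X Y).homologyπ (n + 1) z, ?_⟩
    rw [hfac, fromCycles_apply]
    congr 1
    exact (cochains X Y).i_cyclesMk (i := n + 1) f (n + 2) (by simp) hf

/-- A lift of `g` to a map of projective resolutions. -/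
def resHom {X X' : ModuleCat.{0} R} (g : X' ⟶ X) :
    ProjectiveResolution.Hom (projectiveResolution X') (projectiveResolution X) g where
  hom := ProjectiveResolution.lift g _ _
  hom_f_zero_comp_π_f_zero := ProjectiveResolution.lift_commutes_zero g _ _

/-- The map `Hom(P_•, Y) ⟶ Hom(P'_•, Y)` induced by `g : X' ⟶ X`. -/
def cochainsMap {X X' : ModuleCat.{0} R} (g : X' ⟶ X) (Y : ModuleCat.{0} R) :
    cochains X Y ⟶ cochains X' Y :=
  (HomologicalComplex.unopFunctor _ _).map
   ((((linearYoneda R (ModuleCat R)).obj Y).rightOp.mapHomologicalComplex _).map (resHom g).hom).op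

lemma fromCycles_naturality {X X' : ModuleCat.{0} R} (g : X' ⟶ X) (Y : ModuleCat.{0} R) (n : ℕ) :
    HomologicalComplex.cyclesMap (cochainsMap g Y) n ≫ fromCycles X' Y n =
      fromCycles X Y n ≫ (extFunctor n Y).map g.op := by
  ext z
  change fromCycles X' Y n (HomologicalComplex.cyclesMap (cochainsMap g Y) n z) =
    (Abelian.Ext.mk₀ g).comp (fromCycles X Y n z) (zero_add n)
  rw [fromCycles_apply, fromCycles_apply, ProjectiveResolution.mk₀_comp_extMk _ _ _ _ (resHom g)]
  congr 1
  have := HomologicalComplex.cyclesMap_i (cochainsMap g Y) n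
  exact congr($this z)

lemma fromHomology_naturality {X X' : ModuleCat.{0} R} (g : X' ⟶ X) (Y : ModuleCat.{0} R) (n : ℕ) :
    HomologicalComplex.homologyMap (cochainsMap g Y) (n + 1) ≫ fromHomology X' Y n =
      fromHomology X Y n ≫ (extFunctor (n + 1) Y).map g.op := by
  rw [← cancel_epi ((cochains X Y).homologyπ (n + 1)),
    HomologicalComplex.homologyπ_naturality_assoc, π_fromHomology, fromCycles_naturality,
    ← Category.assoc, π_fromHomology]

lemma homologyUnop_inv_naturality {V : Type*} [Category V] [Abelian V] {ι : Type*}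
    {c : ComplexShape ι} {K L : HomologicalComplex Vᵒᵖ c} (ψ : K ⟶ L) (i : ι) :
    (HomologicalComplex.homologyMap ψ i).unop ≫ (K.homologyUnop i).inv =
      (L.homologyUnop i).inv ≫
        HomologicalComplex.homologyMap ((HomologicalComplex.unopFunctor V c).map ψ.op) i := by
  have aux {A A' B B' : V} (a : A ≅ A') (b : B ≅ B') (f : A ⟶ B) (f' : A' ⟶ B')
      (h : a.hom ≫ f' = f ≫ b.hom) : f' ≫ b.inv = a.inv ≫ f := by
    rw [Iso.eq_inv_comp, ← Category.assoc, Iso.comp_inv_eq, h]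
  have h := HomologicalComplex.homologyOp_hom_naturality
    ((HomologicalComplex.unopFunctor V c).map ψ.op) i
  exact aux (L.homologyUnop i) (K.homologyUnop i) _ _ congr($(h).unop)

lemma isoExt_naturality {X X' : ModuleCat.{0} R} (g : X' ⟶ X) (Y : ModuleCat.{0} R) (n : ℕ) :
    ((_root_.Ext R (ModuleCat.{0} R) n).map g.op).app Y ≫
      ((projectiveResolution X').isoExt (R := R) n Y).hom =
    ((projectiveResolution X).isoExt (R := R) n Y).hom ≫
      HomologicalComplex.homologyMap (cochainsMap g Y) n := by
  have h1 := ProjectiveResolution.isoLeftDerivedObj_inv_naturality g (projectiveResolution X')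
    (projectiveResolution X) (resHom g).hom (ProjectiveResolution.lift_commutes_zero g _ _)
    ((linearYoneda R (ModuleCat R)).obj Y).rightOp n
  have h2 := homologyUnop_inv_naturality
    ((((linearYoneda R (ModuleCat R)).obj Y).rightOp.mapHomologicalComplex _).map (resHom g).hom) n
  have h1' := congr($(h1).unop ≫ (HomologicalComplex.homologyUnop _ n).inv)
  exact (Category.assoc _ _ _).symm.trans (h1'.trans ((Category.assoc _ _ _).trans
    (congr(_ ≫ $h2).trans (Category.assoc _ _ _).symm)))

/-- In positive degrees, the derived-functor `Ext` agrees with `Abelian.Ext`, naturally in the first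
variable. -/
def extIso (n : ℕ) (Y : ModuleCat.{0} R) :
    (_root_.Ext R (ModuleCat.{0} R) (n + 1)).flip.obj Y ≅ extFunctor (n + 1) Y :=
  NatIso.ofComponents
    (fun X ↦ (projectiveResolution X.unop).isoExt (R := R) (n + 1) Y ≪≫
      asIso (fromHomology X.unop Y n))
    (fun {X X'} g ↦ by
      have h1 := isoExt_naturality g.unop Y (n + 1)
      have h2 := fromHomology_naturality g.unop Y n
      exact (Category.assoc _ _ _).symm.trans (congr($h1 ≫ _).trans ((Category.assoc _ _ _).trans
        (congr(_ ≫ $h2).trans (Category.assoc _ _ _).symm))))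

/-- The local cohomology attached to a diagram `I` of ideals, as a colimit of
`Abelian.Ext (R ⧸ I_t) Y`. -/
def ofDiagramIso (I : D ⥤ Ideal R) (n : ℕ) (Y : ModuleCat.{0} R) :
    (ofDiagram.{0, 0} I (n + 1)).obj Y ≅ colimit ((ringModIdeals I).op ⋙ extFunctor (n + 1) Y) :=
  colimitObjIsoColimitCompEvaluation (diagram I (n + 1)) Y ≪≫
    HasColimit.isoOfNatIso (Functor.isoWhiskerLeft (ringModIdeals I).op (extIso n Y))

/-! ### The Mayer–Vietoris sequence for `Ext` -/

/-- The pointwise intersection of two diagrams of ideals. -/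
@[simps]
def infDiagram (I J : D ⥤ Ideal R) : D ⥤ Ideal R where
  obj t := I.obj t ⊓ J.obj t
  map w := homOfLE (inf_le_inf (leOfHom (I.map w)) (leOfHom (J.map w)))

/-- The pointwise sum of two diagrams of ideals. -/
@[simps]
def supDiagram (I J : D ⥤ Ideal R) : D ⥤ Ideal R where
  obj t := I.obj t ⊔ J.obj t
  map w := homOfLE (sup_le_sup (leOfHom (I.map w)) (leOfHom (J.map w)))

/-- The Mayer–Vietoris complex `R/(I ∩ J) ⟶ R/I × R/J ⟶ R/(I + J)`, with maps
`x ↦ (x, x)` and `(x, y) ↦ x - y`. -/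
def mvComplex (I J : Ideal R) : ShortComplex (ModuleCat.{0} R) :=
  ModuleCat.shortComplexOfCompEqZero
    (LinearMap.prod (Submodule.factor (inf_le_left : I ⊓ J ≤ I))
      (Submodule.factor (inf_le_right : I ⊓ J ≤ J)))
    (LinearMap.coprod (Submodule.factor (le_sup_left : I ≤ I ⊔ J))
      (-(Submodule.factor (le_sup_right : J ≤ I ⊔ J))))
    (by
      ext
      simp)

lemma mvComplex_shortExact (I J : Ideal R) : (mvComplex I J).ShortExact where
  exact := by
    rw [ShortComplex.moduleCat_exact_iff]
    rintro ⟨x, y⟩ h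
    obtain ⟨a, rfl⟩ := Submodule.Quotient.mk_surjective _ x
    obtain ⟨b, rfl⟩ := Submodule.Quotient.mk_surjective _ y
    have hab : a - b ∈ I ⊔ J := by
      rw [← Submodule.Quotient.mk_eq_zero]
      refine Eq.trans ?_ h
      exact sub_eq_add_neg (Submodule.Quotient.mk (p := I ⊔ J) a) (Submodule.Quotient.mk b)
    obtain ⟨i, hi, j, hj, hij⟩ := Submodule.mem_sup.mp hab
    -- the common lift of `a` and `b` is `a - i = b + j`
    refine ⟨Submodule.Quotient.mk (a - i), Prod.ext ?_ ?_⟩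
    · exact (Submodule.Quotient.eq I).mpr (by simpa using hi)
    · refine (Submodule.Quotient.eq J).mpr ?_
      have : a - i - b = j := by linear_combination -hij
      exact this ▸ hj
  mono_f := by
    rw [ModuleCat.mono_iff_injective]
    refine (injective_iff_map_eq_zero (mvComplex I J).f.hom).mpr fun x h ↦ ?_
    obtain ⟨a, rfl⟩ := Submodule.Quotient.mk_surjective _ x
    refine (Submodule.Quotient.mk_eq_zero _).mpr ⟨?_, ?_⟩
    · exact (Submodule.Quotient.mk_eq_zero _).mp congr(($h).1)
    · exact (Submodule.Quotient.mk_eq_zero _).mp congr(($h).2)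
  epi_g := by
    rw [ModuleCat.epi_iff_surjective]
    intro x
    obtain ⟨a, rfl⟩ := Submodule.Quotient.mk_surjective _ x
    refine ⟨(Submodule.Quotient.mk a, 0), ?_⟩
    refine Eq.trans ?_ (add_zero (Submodule.Quotient.mk (p := I ⊔ J) a))
    exact congr(Submodule.Quotient.mk (p := I ⊔ J) a + $(map_zero
      (-(Submodule.factor (le_sup_right : J ≤ I ⊔ J)))))

/-- `R ⧸ I` as an object of the category of `R`-modules. -/
abbrev quot (I : Ideal R) : ModuleCat.{0} R := ModuleCat.of R (R ⧸ I)

/-- Functoriality of the Mayer–Vietoris complex in the pair of ideals. -/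
def mvMap {I J I' J' : Ideal R} (hI : I ≤ I') (hJ : J ≤ J') :
    mvComplex I J ⟶ mvComplex I' J' where
  τ₁ := ModuleCat.ofHom (Submodule.mapQ _ _ LinearMap.id (inf_le_inf hI hJ))
  τ₂ := ModuleCat.ofHom (LinearMap.prodMap (Submodule.mapQ _ _ LinearMap.id hI)
    (Submodule.mapQ _ _ LinearMap.id hJ))
  τ₃ := ModuleCat.ofHom (Submodule.mapQ _ _ LinearMap.id (sup_le_sup hI hJ))
  comm₁₂ := by
    apply ModuleCat.hom_ext
    refine LinearMap.ext fun x ↦ ?_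
    obtain ⟨a, rfl⟩ := Submodule.Quotient.mk_surjective _ x
    rfl
  comm₂₃ := by
    apply ModuleCat.hom_ext
    refine LinearMap.ext ?_
    rintro ⟨x, y⟩
    obtain ⟨a, rfl⟩ := Submodule.Quotient.mk_surjective _ x
    obtain ⟨b, rfl⟩ := Submodule.Quotient.mk_surjective _ y
    rfl

/-- The projection of the middle term `R/I × R/J` to `R/I`. -/
def mvFst (I J : Ideal R) : (mvComplex I J).X₂ ⟶ quot I :=
  ModuleCat.ofHom (LinearMap.fst R (R ⧸ I) (R ⧸ J))

/-- The projection of the middle term `R/I × R/J` to `R/J`. -/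
def mvSnd (I J : Ideal R) : (mvComplex I J).X₂ ⟶ quot J :=
  ModuleCat.ofHom (LinearMap.snd R (R ⧸ I) (R ⧸ J))

/-- The inclusion of `R/I` in the middle term `R/I × R/J`. -/
def mvInl (I J : Ideal R) : quot I ⟶ (mvComplex I J).X₂ :=
  ModuleCat.ofHom (LinearMap.inl R (R ⧸ I) (R ⧸ J))

/-- The inclusion of `R/J` in the middle term `R/I × R/J`. -/
def mvInr (I J : Ideal R) : quot J ⟶ (mvComplex I J).X₂ :=
  ModuleCat.ofHom (LinearMap.inr R (R ⧸ I) (R ⧸ J))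

lemma mv_id (I J : Ideal R) : mvFst I J ≫ mvInl I J + mvSnd I J ≫ mvInr I J = 𝟙 _ := by
  apply ModuleCat.hom_ext
  exact LinearMap.ext fun x => Prod.ext (add_zero _) (zero_add _)

lemma mvInr_mvSnd (I J : Ideal R) : mvInr I J ≫ mvSnd I J = 𝟙 _ := rfl

open Abelian in
/-- A class on `R/I × R/J` is the sum of its restrictions to the two factors. -/
lemma ext_mv_eq (I J : Ideal R) {Y : ModuleCat.{0} R} {n : ℕ} (x : Ext (mvComplex I J).X₂ Y n) :
    x = (Ext.mk₀ (mvFst I J)).comp ((Ext.mk₀ (mvInl I J)).comp x (zero_add n)) (zero_add n) +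
      (Ext.mk₀ (mvSnd I J)).comp ((Ext.mk₀ (mvInr I J)).comp x (zero_add n)) (zero_add n) := by
  rw [Ext.mk₀_comp_mk₀_assoc, Ext.mk₀_comp_mk₀_assoc, ← Ext.add_comp, ← Ext.mk₀_add, mv_id,
    Ext.mk₀_id_comp]

/-- The quotient map `R/(I ∩ J) ⟶ R/J`. -/
def mvQ (I J : Ideal R) : quot (I ⊓ J) ⟶ quot J :=
  ModuleCat.ofHom (Submodule.mapQ _ _ LinearMap.id inf_le_right)

open Abelian in
lemma mvQ_comp (I J : Ideal R) {Y : ModuleCat.{0} R} {n : ℕ} (z : Ext (quot J) Y n) :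
    (Ext.mk₀ (mvQ I J)).comp z (zero_add n) = (Ext.mk₀ (mvComplex I J).f).comp
      ((Ext.mk₀ (mvSnd I J)).comp z (zero_add n)) (zero_add n) :=
  (Ext.mk₀_comp_mk₀_assoc (mvComplex I J).f (mvSnd I J) z).symm

open Abelian in
/-- Pullback along `R/(I ∩ J) ⟶ R/J` is bijective on `Ext^n(-, Y)` as soon as the other three terms
in the adjacent part of the Mayer–Vietoris sequence vanish. -/
lemma bijective_mvQ (I J : Ideal R) (Y : ModuleCat.{0} R) (n : ℕ)
    (h1 : Subsingleton (Ext (quot I) Y n))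
    (h2 : Subsingleton (Ext (quot (I ⊔ J)) Y n))
    (h3 : Subsingleton (Ext (quot (I ⊔ J)) Y (1 + n))) :
    Function.Bijective fun y : Ext (quot J) Y n ↦ (Ext.mk₀ (mvQ I J)).comp y (zero_add n) := by
  constructor
  · intro y y' h
    rw [← sub_eq_zero]
    generalize hz : y - y' = z
    have hz0 : (Ext.mk₀ (mvQ I J)).comp z (zero_add n) = 0 := by
      rw [← hz, sub_eq_add_neg, Ext.comp_add, Ext.comp_neg, ← sub_eq_add_neg, sub_eq_zero]
      exact h
    replace hz0 := (mvQ_comp I J z).symm.trans hz0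
    obtain ⟨w, hw⟩ := Ext.contravariant_sequence_exact₂ (mvComplex_shortExact I J) Y _ hz0
    obtain rfl : w = 0 := h2.elim _ _
    rw [Ext.comp_zero] at hw
    have := congr((Ext.mk₀ (mvInr I J)).comp $hw (zero_add n))
    rw [Ext.comp_zero, Ext.mk₀_comp_mk₀_assoc, mvInr_mvSnd, Ext.mk₀_id_comp] at this
    exact this.symm
  · intro w
    obtain ⟨x, hx⟩ := Ext.contravariant_sequence_exact₁ (mvComplex_shortExact I J) Y w rfl
      (h3.elim _ _)
    refine ⟨(Ext.mk₀ (mvInr I J)).comp x (zero_add n), ?_⟩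
    refine (mvQ_comp I J _).trans (Eq.trans ?_ hx)
    congr 1
    conv_rhs => rw [ext_mv_eq I J x, h1.elim ((Ext.mk₀ (mvInl I J)).comp x (zero_add n)) 0]
    simp

open Abelian in
/-- The connecting map `Ext^n(R/(I ∩ J), Y) ⟶ Ext^(n+1)(R/(I + J), Y)` is bijective as soon as
`Ext(R/I, Y)` and `Ext(R/J, Y)` vanish in degrees `n` and `n + 1`. -/
lemma bijective_mvδ (I J : Ideal R) (Y : ModuleCat.{0} R) (n : ℕ)
    (h1 : Subsingleton (Ext (quot I) Y n)) (h2 : Subsingleton (Ext (quot J) Y n))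
    (h3 : Subsingleton (Ext (quot I) Y (n + 1))) (h4 : Subsingleton (Ext (quot J) Y (n + 1))) :
    Function.Bijective fun y : Ext (mvComplex I J).X₁ Y n ↦
      (mvComplex_shortExact I J).extClass.comp y (add_comm 1 n) := by
  have h5 (m) (h1 : Subsingleton (Ext (quot I) Y m)) (h2 : Subsingleton (Ext (quot J) Y m))
      (x : Ext (mvComplex I J).X₂ Y m) : x = 0 := by
    rw [ext_mv_eq I J x, h1.elim ((Ext.mk₀ (mvInl I J)).comp x (zero_add m)) 0,
      h2.elim ((Ext.mk₀ (mvInr I J)).comp x (zero_add m)) 0]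
    simp
  constructor
  · intro y y' h
    rw [← sub_eq_zero]
    obtain ⟨x, hx⟩ := Ext.contravariant_sequence_exact₁ (mvComplex_shortExact I J) Y (y - y')
      (add_comm 1 n) (by
        rw [sub_eq_add_neg, Ext.comp_add, Ext.comp_neg, ← sub_eq_add_neg, sub_eq_zero]
        exact h)
    exact hx.symm.trans (congr((Ext.mk₀ (mvComplex I J).f).comp $(h5 _ h1 h2 x)
      (zero_add n)).trans (Ext.comp_zero ..))
  · intro w
    exact Ext.contravariant_sequence_exact₃ (mvComplex_shortExact I J) Y w (h5 _ h3 h4 _)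
      (add_comm 1 n)

open Abelian in
/-- The passage of `bijective_mvQ` to the colimit over diagrams of ideals. -/
def mvIsoRight (I J : D ⥤ Ideal R) (Y : ModuleCat.{0} R) (n : ℕ)
    (h1 : ∀ t, Subsingleton (Ext (quot (I.obj t)) Y (n + 1)))
    (h2 : ∀ t, Subsingleton (Ext (quot (I.obj t ⊔ J.obj t)) Y (n + 1)))
    (h3 : ∀ t, Subsingleton (Ext (quot (I.obj t ⊔ J.obj t)) Y (n + 2))) :
    (ofDiagram.{0, 0} J (n + 1)).obj Y ≅ (ofDiagram.{0, 0} (infDiagram I J) (n + 1)).obj Y :=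
  have (t : D) : IsIso ((extFunctor (n + 1) Y).map (mvQ (I.obj t) (J.obj t)).op) := by
    rw [ConcreteCategory.isIso_iff_bijective]
    exact bijective_mvQ _ _ _ _ (h1 t) (h2 t) (by rw [add_comm 1 (n + 1)]; exact h3 t)
  ofDiagramIso J n Y ≪≫ HasColimit.isoOfNatIso (NatIso.ofComponents
    (F := (ringModIdeals J).op ⋙ extFunctor (n + 1) Y)
    (G := (ringModIdeals (infDiagram I J)).op ⋙ extFunctor (n + 1) Y)
    (fun t ↦ @asIso _ _ _ _ ((extFunctor (n + 1) Y).map (mvQ (I.obj t.unop) (J.obj t.unop)).op)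
      (this t.unop))
    (fun {t t'} w ↦ by
      have h : (mvQ (I.obj t'.unop) (J.obj t'.unop)) ≫ (ringModIdeals J).map w.unop =
          (ringModIdeals (infDiagram I J)).map w.unop ≫ mvQ (I.obj t.unop) (J.obj t.unop) := by
        apply ModuleCat.hom_ext
        refine LinearMap.ext fun x ↦ ?_
        obtain ⟨a, rfl⟩ := Submodule.Quotient.mk_surjective _ x
        rfl
      exact ((extFunctor (n + 1) Y).map_comp _ _).symm.trans
        (congr((extFunctor (n + 1) Y).map (Quiver.Hom.op $h)).trans
          ((extFunctor (n + 1) Y).map_comp _ _)))) ≪≫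
  (ofDiagramIso (infDiagram I J) n Y).symm

open Abelian in
/-- The connecting map of the Mayer–Vietoris sequence, given by the product with the
extension class. -/
def mvδ (I J : Ideal R) (Y : ModuleCat.{0} R) (n : ℕ) :
    (extFunctor n Y).obj (op (quot (I ⊓ J))) ⟶ (extFunctor (n + 1) Y).obj (op (quot (I ⊔ J))) :=
  ModuleCat.ofHom (Ext.bilinearCompOfLinear R _ _ Y 1 n (n + 1) (add_comm 1 n)
    (mvComplex_shortExact I J).extClass)

open Abelian in
/-- The passage of `bijective_mvδ` to the colimit over diagrams of ideals. -/
def mvIsoδ (I J : D ⥤ Ideal R) (Y : ModuleCat.{0} R) (n : ℕ)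
    (h1 : ∀ t, Subsingleton (Ext (quot (I.obj t)) Y (n + 1)))
    (h2 : ∀ t, Subsingleton (Ext (quot (J.obj t)) Y (n + 1)))
    (h3 : ∀ t, Subsingleton (Ext (quot (I.obj t)) Y (n + 2)))
    (h4 : ∀ t, Subsingleton (Ext (quot (J.obj t)) Y (n + 2))) :
    (ofDiagram.{0, 0} (infDiagram I J) (n + 1)).obj Y ≅
      (ofDiagram.{0, 0} (supDiagram I J) (n + 2)).obj Y :=
  have (t : D) : IsIso (mvδ (I.obj t) (J.obj t) Y (n + 1)) := by
    rw [ConcreteCategory.isIso_iff_bijective]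
    exact bijective_mvδ _ _ _ _ (h1 t) (h2 t) (h3 t) (h4 t)
  ofDiagramIso (infDiagram I J) n Y ≪≫ HasColimit.isoOfNatIso (NatIso.ofComponents
    (F := (ringModIdeals (infDiagram I J)).op ⋙ extFunctor (n + 1) Y)
    (G := (ringModIdeals (supDiagram I J)).op ⋙ extFunctor (n + 2) Y)
    (fun t ↦ @asIso _ _ _ _ (mvδ (I.obj t.unop) (J.obj t.unop) Y (n + 1))
      (this t.unop))
    (fun {t t'} w ↦ by
      have h := ShortComplex.ShortExact.extClass_naturality
        (mvComplex_shortExact (I.obj t'.unop) (J.obj t'.unop))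
        (mvComplex_shortExact (I.obj t.unop) (J.obj t.unop))
        (mvMap (leOfHom (I.map w.unop)) (leOfHom (J.map w.unop)))
      apply ModuleCat.hom_ext
      refine LinearMap.ext fun (x : Ext (mvComplex (I.obj t.unop) (J.obj t.unop)).X₁ Y (n + 1)) ↦ ?_
      exact (Ext.comp_assoc_of_second_deg_zero _ _ _ _).symm.trans
        ((congr(Ext.comp $h x (add_comm 1 (n + 1)))).trans
          (Ext.comp_assoc _ _ _ (zero_add 1) (add_comm 1 (n + 1)) (by lia))))) ≪≫
  (ofDiagramIso (supDiagram I J) (n + 1) Y).symm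

/-! ### Cofinal sequences of ideals -/

/-- A decreasing sequence of ideals `I_t` cofinal with the powers of `J` computes local cohomology
with support in `J`. -/
lemma nonempty_iso_of_cofinal [IsNoetherianRing R] (J : Ideal R) (I : ℕᵒᵖ ⥤ Ideal R)
    (h : ∀ t, J ≤ (I.obj t).radical) (h' : ∀ s, ∃ t, I.obj t ≤ J ^ s)
    (n : ℕ) (Y : ModuleCat.{0} R) :
    Nonempty ((ofDiagram.{0, 0} I n).obj Y ≅ (localCohomology J n).obj Y) := by
  let F : ℕᵒᵖ ⥤ SelfLERadical J := ObjectProperty.lift _ I h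
  have : F.Initial :=
    { out J' := by
        apply +allowSynthFailures zigzag_isConnected
        · obtain ⟨k, hk⟩ := Ideal.exists_pow_le_of_le_radical_of_fg J'.2 (IsNoetherian.noetherian _)
          obtain ⟨t, ht⟩ := h' k
          exact ⟨CostructuredArrow.mk (⟨⟨⟨ht.trans hk⟩⟩⟩ : F.obj t ⟶ J')⟩
        · intro j1 j2
          apply Relation.ReflTransGen.single
          rcases le_total (unop j1.left) (unop j2.left) with h | h
          · right; exact ⟨CostructuredArrow.homMk (homOfLE h).op rfl⟩
          · left; exact ⟨CostructuredArrow.homMk (homOfLE h).op rfl⟩ }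
  exact ⟨((isoOfFinal.{0,0,0} F (selfLERadicalDiagram J) n) ≪≫ isoSelfLERadical J n).app Y⟩

/-! ### Vanishing of `Ext` for regular sequences -/

/-- Dividing by a weakly regular sequence raises the projective dimension by at most its length. -/
lemma hasProjectiveDimensionLT_quotient (rs : List R)
    (M : ModuleCat.{0} R) (n : ℕ) (reg : IsWeaklyRegular M rs) (hM : HasProjectiveDimensionLT M n) :
    HasProjectiveDimensionLT (ModuleCat.of R (M ⧸ Ideal.ofList rs • (⊤ : Submodule R M)))
      (n + rs.length) := by
  induction rs generalizing M n with
  | nil =>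
    refine hasProjectiveDimensionLT_of_iso
      (Submodule.quotEquivOfEqBot (Ideal.ofList [] • (⊤ : Submodule R M)) ?_).symm.toModuleIso n
    rw [Ideal.ofList_nil, Submodule.bot_smul]
  | cons x rs ih =>
    rw [isWeaklyRegular_cons_iff] at reg
    have h : HasProjectiveDimensionLT (ModuleCat.of R (QuotSMulTop x M)) (n + 1) :=
      (IsSMulRegular.smulShortComplex_shortExact reg.1).hasProjectiveDimensionLT_X₃ n hM
        (hasProjectiveDimensionLT_of_ge M n (n + 1) (Nat.le_succ n))
    have := ih (ModuleCat.of R (QuotSMulTop x M)) (n + 1) reg.2 h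
    rw [List.length_cons, add_comm rs.length, ← add_assoc]
    exact hasProjectiveDimensionLT_of_iso
      (Submodule.quotOfListConsSMulTopEquivQuotSMulTopInner M x rs).symm.toModuleIso _

/-- `Ext^i(R/(rs), Y) = 0` for `i` above the length of a weakly regular sequence `rs`. -/
lemma subsingleton_ext_of_length_lt (rs : List R) (reg : IsWeaklyRegular R rs) (Y : ModuleCat.{0} R)
    (i : ℕ) (hi : rs.length < i) : Subsingleton (Abelian.Ext (quot (Ideal.ofList rs)) Y i) := by
  have h1 : HasProjectiveDimensionLT (ModuleCat.of R R) 1 :=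
    projective_iff_hasProjectiveDimensionLT_one.mp inferInstance
  have h2 := hasProjectiveDimensionLT_quotient rs (ModuleCat.of R R) 1 reg h1
  have h3 : HasProjectiveDimensionLT (quot (Ideal.ofList rs)) (1 + rs.length) :=
    hasProjectiveDimensionLT_of_iso (Submodule.quotEquivOfEq
      (Ideal.ofList rs • (⊤ : Submodule R R)) (Ideal.ofList rs) (by simp)).toModuleIso _
  exact HasProjectiveDimensionLT.subsingleton _ (1 + rs.length) i (by lia) Y

/-- `Ext^i(R/(rs), R) = 0` for `i` below the length of a regular sequence `rs` (Rees). -/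
lemma subsingleton_ext_of_lt_length [IsNoetherianRing R] (rs : List R) (reg : IsWeaklyRegular R rs)
    (hne : Ideal.ofList rs ≠ ⊤) (i : ℕ) (hi : i < rs.length) :
    Subsingleton (Abelian.Ext (quot (Ideal.ofList rs)) (ModuleCat.of R R) i) := by
  have hsupp : Module.support R (R ⧸ Ideal.ofList rs) ⊆
      PrimeSpectrum.zeroLocus (Ideal.ofList rs) := by
    rw [Module.support_eq_zeroLocus, Ideal.annihilator_quotient]
  have htop : Ideal.ofList rs • (⊤ : Submodule R R) = Ideal.ofList rs := by simp
  have hlt : Ideal.ofList rs • (⊤ : Submodule R R) < ⊤ := by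
    rw [htop]
    exact lt_top_iff_ne_top.mpr hne
  exact ModuleCat.subsingleton_ext_of_exists_isRegular (Ideal.ofList rs)
    (quot (Ideal.ofList rs)) hsupp (ModuleCat.of R R) hlt rs
    (fun r hr ↦ Ideal.subset_span hr) ⟨reg, hlt.ne'⟩ i hi

/-! ### Ideals generated by powers of variables -/

section Polynomial
open MvPolynomial
variable {σ : Type} {k : Type} [Field k]

/-- The ideal of `k[X_i]` generated by the `t`-th powers of the variables in the list `l`. -/
def powIdeal (k : Type) [Field k] (l : List σ) (t : ℕ) : Ideal (MvPolynomial σ k) :=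
  Ideal.ofList (l.map fun i ↦ X i ^ t)

lemma mem_powIdeal_iff (l : List σ) (t : ℕ) (f : MvPolynomial σ k) :
    f ∈ powIdeal k l t ↔ ∀ m ∈ f.support, ∃ i ∈ l, t ≤ m i := by
  classical
  have : powIdeal k l t = Ideal.span ((fun s ↦ monomial s (1 : k)) ''
      {m | ∃ i ∈ l, Finsupp.single i t = m}) := by
    rw [powIdeal, Ideal.ofList]
    congr 1
    ext f
    simp [X_pow_eq_monomial]
  rw [this, mem_ideal_span_monomial_image]
  simp

/-- A power of a variable outside `l` is a nonzerodivisor modulo `powIdeal k l t`. -/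
lemma mem_powIdeal_of_mul {l : List σ} {t : ℕ} {i : σ} (hi : i ∉ l) (n : ℕ) {f : MvPolynomial σ k}
    (h : X i ^ n * f ∈ powIdeal k l t) : f ∈ powIdeal k l t := by
  classical
  rw [mem_powIdeal_iff] at h ⊢
  intro m hm
  obtain ⟨j, hj, hjm⟩ := h (Finsupp.single i n + m) (by
    rw [mem_support_iff, X_pow_eq_monomial, coeff_monomial_mul, one_mul]
    exact mem_support_iff.mp hm)
  refine ⟨j, hj, ?_⟩
  have : i ≠ j := fun h ↦ hi (h ▸ hj)
  simpa [Finsupp.single_apply, this] using hjm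

lemma isWeaklyRegular_pow (l : List σ) (hl : l.Nodup) (t : ℕ) :
    IsWeaklyRegular (MvPolynomial σ k) (l.map fun i ↦ (X i ^ t : MvPolynomial σ k)) := by
  refine ⟨fun i hi ↦ ?_⟩
  rw [isSMulRegular_quotient_iff_mem_of_smul_mem]
  intro f hf
  rw [List.length_map] at hi
  have hsm : (Ideal.ofList ((l.map fun i ↦ (X i ^ t : MvPolynomial σ k)).take i) • ⊤ :
      Submodule (MvPolynomial σ k) (MvPolynomial σ k)) = powIdeal k (l.take i) t := by
    rw [powIdeal, List.map_take]; simp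
  rw [hsm] at hf ⊢
  rw [List.getElem_map, smul_eq_mul] at hf
  refine mem_powIdeal_of_mul (fun h ↦ ?_) t hf
  rw [List.mem_take_iff_getElem] at h
  obtain ⟨j, hj, hji⟩ := h
  have := (hl.getElem_inj_iff).mp hji
  lia

lemma powIdeal_ne_top (l : List σ) (t : ℕ) : powIdeal k l (t + 1) ≠ ⊤ := by
  rw [Ne, Ideal.eq_top_iff_one, mem_powIdeal_iff]
  intro h
  obtain ⟨i, -, hi⟩ := h 0 (by simp)
  simp at hi

lemma powIdeal_append (l l' : List σ) (t : ℕ) :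
    powIdeal k (l ++ l') t = powIdeal k l t ⊔ powIdeal k l' t := by
  rw [powIdeal, List.map_append, Ideal.ofList_append]; rfl

/-- The decreasing sequence of ideals `(X_i^(t+1) : i ∈ l)`. The shift in the exponent keeps them
proper. -/
def powDiagram (k : Type) [Field k] (l : List σ) : ℕᵒᵖ ⥤ Ideal (MvPolynomial σ k) where
  obj t := powIdeal k l (t.unop + 1)
  map {t t'} w := homOfLE fun f hf ↦ by
    have hw : t'.unop ≤ t.unop := leOfHom w.unop
    rw [mem_powIdeal_iff] at hf ⊢
    intro m hm
    obtain ⟨i, hi, him⟩ := hf m hm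
    exact ⟨i, hi, by lia⟩

lemma powIdeal_le_pow (l : List σ) (t : ℕ) : powIdeal k l t ≤ powIdeal k l 1 ^ t := by
  refine Ideal.span_le.mpr fun f hf ↦ ?_
  obtain ⟨i, hi, rfl⟩ := List.mem_map.mp hf
  refine Ideal.pow_mem_pow (Ideal.subset_span ?_) t
  exact List.mem_map.mpr ⟨i, hi, pow_one _⟩

lemma le_radical_powIdeal (l : List σ) (t : ℕ) : powIdeal k l 1 ≤ (powIdeal k l t).radical := by
  refine Ideal.span_le.mpr fun f hf ↦ ?_
  obtain ⟨i, hi, rfl⟩ := List.mem_map.mp hf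
  refine ⟨t, Ideal.subset_span (List.mem_map.mpr ⟨i, hi, ?_⟩)⟩
  simp

/-- For disjoint sets of variables, the intersection of the ideals lies in their product: a monomial
in the intersection is divisible by `X_i^t X_j^t` for some `i ∈ l`, `j ∈ l'`. -/
lemma inf_powIdeal_le_mul {l l' : List σ} (hll' : l.Disjoint l') (t : ℕ) :
    powIdeal k l t ⊓ powIdeal k l' t ≤ powIdeal k l t * powIdeal k l' t := by
  classical
  rintro f ⟨hf, hf'⟩
  rw [SetLike.mem_coe, mem_powIdeal_iff] at hf hf'
  rw [← f.support_sum_monomial_coeff]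
  refine Ideal.sum_mem _ fun m hm ↦ ?_
  obtain ⟨i, hi, him⟩ := hf m hm
  obtain ⟨j, hj, hjm⟩ := hf' m hm
  have hij : i ≠ j := fun h ↦ hll' hi (h ▸ hj)
  have hm' : m = (m - (Finsupp.single i t + Finsupp.single j t)) +
      (Finsupp.single i t + Finsupp.single j t) := by
    refine (tsub_add_cancel_of_le fun a ↦ ?_).symm
    rw [Finsupp.add_apply, Finsupp.single_apply, Finsupp.single_apply]
    split_ifs <;> grind
  have hmon : monomial m (coeff m f) =
      monomial (m - (Finsupp.single i t + Finsupp.single j t)) (coeff m f) *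
        (X i ^ t * X j ^ t) := by
    rw [X_pow_eq_monomial, X_pow_eq_monomial, monomial_mul, monomial_mul, ← hm', one_mul, mul_one]
  rw [hmon]
  exact Ideal.mul_mem_left _ _ (Ideal.mul_mem_mul
    (Ideal.subset_span (List.mem_map.mpr ⟨i, hi, rfl⟩))
    (Ideal.subset_span (List.mem_map.mpr ⟨j, hj, rfl⟩)))

lemma subsingleton_ext_powIdeal_gt {l : List σ} (hl : l.Nodup) (t i : ℕ) (hi : l.length < i)
    (Y : ModuleCat.{0} (MvPolynomial σ k)) :
    Subsingleton (Abelian.Ext (quot (powIdeal k l t)) Y i) :=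
  subsingleton_ext_of_length_lt _ (isWeaklyRegular_pow l hl t) Y i (by simpa using hi)

lemma supDiagram_powDiagram (l l' : List σ) :
    supDiagram (powDiagram k l) (powDiagram k l') = powDiagram k (l ++ l') :=
  CategoryTheory.Functor.ext (fun _ ↦ (powIdeal_append l l' _).symm) fun _ _ _ ↦ Subsingleton.elim _ _

variable [Finite σ]

lemma nonempty_iso_powDiagram (l : List σ) (n : ℕ) (Y : ModuleCat.{0} (MvPolynomial σ k)) :
    Nonempty ((ofDiagram.{0, 0} (powDiagram k l) n).obj Y ≅
      (localCohomology (powIdeal k l 1) n).obj Y) := by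
  refine nonempty_iso_of_cofinal _ _ (fun t ↦ le_radical_powIdeal l _) (fun s ↦ ⟨op s, ?_⟩) n Y
  exact (powIdeal_le_pow l (s + 1)).trans (Ideal.pow_le_pow_right (Nat.le_succ s))

lemma nonempty_iso_infDiagram {l l' : List σ} (hll' : l.Disjoint l') (n : ℕ)
    (Y : ModuleCat.{0} (MvPolynomial σ k)) :
    Nonempty ((ofDiagram.{0, 0} (infDiagram (powDiagram k l) (powDiagram k l')) n).obj Y ≅
      (localCohomology (powIdeal k l 1 * powIdeal k l' 1) n).obj Y) := by
  refine nonempty_iso_of_cofinal _ _ (fun t ↦ ?_) (fun s ↦ ⟨op s, ?_⟩) n Y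
  · rw [infDiagram_obj, Ideal.radical_inf]
    exact Ideal.mul_le_inf.trans (inf_le_inf (le_radical_powIdeal l _) (le_radical_powIdeal l' _))
  · refine (inf_powIdeal_le_mul hll' (s + 1)).trans ?_
    refine (Ideal.mul_mono (powIdeal_le_pow l _) (powIdeal_le_pow l' _)).trans ?_
    rw [← mul_pow]
    exact Ideal.pow_le_pow_right (Nat.le_succ s)

lemma nonempty_iso_supDiagram (l l' : List σ) (n : ℕ)
    (Y : ModuleCat.{0} (MvPolynomial σ k)) :
    Nonempty ((ofDiagram.{0, 0} (supDiagram (powDiagram k l) (powDiagram k l')) n).obj Y ≅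
      (localCohomology (powIdeal k l 1 + powIdeal k l' 1) n).obj Y) := by
  rw [supDiagram_powDiagram, Submodule.add_eq_sup, ← powIdeal_append]
  exact nonempty_iso_powDiagram _ n Y

lemma subsingleton_ext_powIdeal_lt {l : List σ} (hl : l.Nodup) (t i : ℕ) (hi : i < l.length) :
    Subsingleton (Abelian.Ext (quot (powIdeal k l (t + 1)))
      (ModuleCat.of (MvPolynomial σ k) (MvPolynomial σ k)) i) :=
  subsingleton_ext_of_lt_length _ (isWeaklyRegular_pow l hl (t + 1)) (powIdeal_ne_top l t) i
    (by simpa using hi)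

/-- The isomorphism of `mvIsoRight` for `B = (X_i : i ∈ l)` and `B' = (X_j : j ∈ l')`:
`H^(n+1)_{BB'} ≅ H^(n+1)_{B'}`. -/
lemma nonempty_iso_right {l l' : List σ} (hll' : l.Disjoint l')
    (Y : ModuleCat.{0} (MvPolynomial σ k)) (n : ℕ)
    (h1 : ∀ t, Subsingleton (Abelian.Ext (quot (powIdeal k l (t + 1))) Y (n + 1)))
    (h2 : ∀ t, Subsingleton (Abelian.Ext
      (quot (powIdeal k l (t + 1) ⊔ powIdeal k l' (t + 1))) Y (n + 1)))
    (h3 : ∀ t, Subsingleton (Abelian.Ext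
      (quot (powIdeal k l (t + 1) ⊔ powIdeal k l' (t + 1))) Y (n + 2))) :
    Nonempty ((localCohomology (powIdeal k l 1 * powIdeal k l' 1) (n + 1)).obj Y ≅
      (localCohomology (powIdeal k l' 1) (n + 1)).obj Y) := by
  obtain ⟨a⟩ := nonempty_iso_infDiagram hll' (n + 1) Y
  obtain ⟨b⟩ := nonempty_iso_powDiagram l' (n + 1) Y
  exact ⟨a.symm ≪≫ (mvIsoRight (powDiagram k l) (powDiagram k l') Y n
    (fun t ↦ h1 _) (fun t ↦ h2 _) (fun t ↦ h3 _)).symm ≪≫ b⟩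

/-- The isomorphism of `mvIsoδ` for `B = (X_i : i ∈ l)` and `B' = (X_j : j ∈ l')`:
`H^(n+1)_{BB'} ≅ H^(n+2)_{B+B'}`. -/
lemma nonempty_iso_δ {l l' : List σ} (hll' : l.Disjoint l')
    (Y : ModuleCat.{0} (MvPolynomial σ k)) (n : ℕ)
    (h1 : ∀ t, Subsingleton (Abelian.Ext (quot (powIdeal k l (t + 1))) Y (n + 1)))
    (h2 : ∀ t, Subsingleton (Abelian.Ext (quot (powIdeal k l' (t + 1))) Y (n + 1)))
    (h3 : ∀ t, Subsingleton (Abelian.Ext (quot (powIdeal k l (t + 1))) Y (n + 2)))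
    (h4 : ∀ t, Subsingleton (Abelian.Ext (quot (powIdeal k l' (t + 1))) Y (n + 2))) :
    Nonempty ((localCohomology (powIdeal k l 1 * powIdeal k l' 1) (n + 1)).obj Y ≅
      (localCohomology (powIdeal k l 1 + powIdeal k l' 1) (n + 2)).obj Y) := by
  obtain ⟨a⟩ := nonempty_iso_infDiagram hll' (n + 1) Y
  obtain ⟨b⟩ := nonempty_iso_supDiagram l l' (n + 2) Y
  exact ⟨a.symm ≪≫ mvIsoδ (powDiagram k l) (powDiagram k l') Y n
    (fun t ↦ h1 _) (fun t ↦ h2 _) (fun t ↦ h3 _) (fun t ↦ h4 _) ≪≫ b⟩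

end Polynomial

end LocCoh

end

open MvPolynomial

/-- Let `R = k[X₀,…,X₄]`, `B₁ = (X₀,X₁,X₂)`, `B₂ = (X₃,X₄)`,
`B = B₁·B₂` and `m = B₁ + B₂`. Then `H²_B(R) ≅ H²_{B₂}(R)`, `H³_B(R) ≅ H³_{B₁}(R)`
and `H⁴_B(R) ≅ H⁵_m(R)` as `R`-modules. -/
theorem localCohomology_description_P2xP1
    {k : Type} [Field k] :
    ∀ (B₁ : Ideal (MvPolynomial (Fin 5) k)) (B₂ : Ideal (MvPolynomial (Fin 5) k)),
      B₁ = Ideal.span {X 0, X 1, X 2} → B₂ = Ideal.span {X 3, X 4} →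
      Nonempty
        ((localCohomology (B₁ * B₂) 2).obj
            (ModuleCat.of (MvPolynomial (Fin 5) k) (MvPolynomial (Fin 5) k)) ≅
          (localCohomology B₂ 2).obj
            (ModuleCat.of (MvPolynomial (Fin 5) k) (MvPolynomial (Fin 5) k))) ∧
      Nonempty
        ((localCohomology (B₁ * B₂) 3).obj
            (ModuleCat.of (MvPolynomial (Fin 5) k) (MvPolynomial (Fin 5) k)) ≅
          (localCohomology B₁ 3).obj
            (ModuleCat.of (MvPolynomial (Fin 5) k) (MvPolynomial (Fin 5) k))) ∧
      Nonempty
        ((localCohomology (B₁ * B₂) 4).obj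
            (ModuleCat.of (MvPolynomial (Fin 5) k) (MvPolynomial (Fin 5) k)) ≅
          (localCohomology (B₁ + B₂) 5).obj
            (ModuleCat.of (MvPolynomial (Fin 5) k) (MvPolynomial (Fin 5) k))) := by
  intro B₁ B₂ h₁ h₂
  let l₁ : List (Fin 5) := [0, 1, 2]
  let l₂ : List (Fin 5) := [3, 4]
  have hl₁ : l₁.Nodup := by decide
  have hl₂ : l₂.Nodup := by decide
  have hl : l₁.Disjoint l₂ := by simp [l₁, l₂]
  have e₁ : B₁ = LocCoh.powIdeal k l₁ 1 := by
    rw [h₁, LocCoh.powIdeal, Ideal.ofList]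
    congr 1
    ext f
    simp [l₁]
  have e₂ : B₂ = LocCoh.powIdeal k l₂ 1 := by
    rw [h₂, LocCoh.powIdeal, Ideal.ofList]
    congr 1
    ext f
    simp [l₂]
  have hsup (t i : ℕ) (hi : i < 5) : Subsingleton (CategoryTheory.Abelian.Ext
      (LocCoh.quot (LocCoh.powIdeal k l₁ (t + 1) ⊔ LocCoh.powIdeal k l₂ (t + 1)))
      (ModuleCat.of (MvPolynomial (Fin 5) k) (MvPolynomial (Fin 5) k)) i) := by
    rw [← LocCoh.powIdeal_append]
    exact LocCoh.subsingleton_ext_powIdeal_lt (l := l₁ ++ l₂) (by decide) t i hi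
  rw [e₁, e₂]
  refine ⟨?_, ?_, ?_⟩
  · exact LocCoh.nonempty_iso_right hl _ 1
      (fun t ↦ LocCoh.subsingleton_ext_powIdeal_lt hl₁ _ 2 (by decide))
      (fun t ↦ hsup _ 2 (by decide)) (fun t ↦ hsup _ 3 (by decide))
  · rw [mul_comm]
    exact LocCoh.nonempty_iso_right hl.symm _ 2
      (fun t ↦ LocCoh.subsingleton_ext_powIdeal_gt hl₂ _ 3 (by decide) _)
      (fun t ↦ by rw [sup_comm]; exact hsup _ 3 (by decide))
      (fun t ↦ by rw [sup_comm]; exact hsup _ 4 (by decide))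
  · exact LocCoh.nonempty_iso_δ hl _ 3
      (fun t ↦ LocCoh.subsingleton_ext_powIdeal_gt hl₁ _ 4 (by decide) _)
      (fun t ↦ LocCoh.subsingleton_ext_powIdeal_gt hl₂ _ 4 (by decide) _)
      (fun t ↦ LocCoh.subsingleton_ext_powIdeal_gt hl₁ _ 5 (by decide) _)
      (fun t ↦ LocCoh.subsingleton_ext_powIdeal_gt hl₂ _ 5 (by decide) _)
end
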